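/- Recursive evaluation of the (p,q)-blossom from control points: let n ≥ 1, let p, q be reals with 0 < q < p, let P_0, …, P_n be reals, let S(t) = Σ_{i=0}^{n} P_i B_i^n(t;p,q), and let s : ℝ^n → ℝ be the (p,q)-blossom of S. Define functions Q_i^k of k real variables by Q_i^0 = P_i for i = 0, …, n, and Q_i^{k+1}(u_1, …, u_{k+1}) = (1 − u_{k+1} p^{i+1−n} q^{−i}) Q_i^k(u_1, …, u_k) + u_{k+1} p^{i+1−n} q^{−i} Q_{i+1}^k(u_1, …, u_k) for k = 0, …, n−1 and i = 0, …, n−k−1. Then for all k = 0, …, n and i = 0, …, n−k, Q_i^k(u_1, …, u_k) = s(0, …, 0, p^{n−1}, p^{n−2}q, …, p^{n−i}q^{i−1}, u_1, …, u_k), where the first n−k−i arguments are 0; in particular Q_0^n(u_1, …, u_n) = s(u_1, …, u_n). -/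

import Mathlib

/-- The (p,q)-integer `[n]_{p,q} = Σ_{j=0}^{n-1} p^{n-1-j} q^j`. -/
noncomputable def pqInt (p q : ℝ) (n : ℕ) : ℝ :=
  ∑ j ∈ Finset.range n, p ^ (n - 1 - j) * q ^ j

/-- The (p,q)-factorial `[n]_{p,q}! = ∏_{j=1}^{n} [j]_{p,q}`. -/
noncomputable def pqFact (p q : ℝ) : ℕ → ℝ
  | 0 => 1
  | n + 1 => pqFact p q n * pqInt p q (n + 1)

/-- The (p,q)-binomial coefficient `[n choose k]_{p,q}`. -/
noncomputable def pqBinom (p q : ℝ) (n k : ℕ) : ℝ :=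
  pqFact p q n / (pqFact p q k * pqFact p q (n - k))

/-- The (p,q)-Bernstein basis function
`B_k^n(t;p,q) = p^{k(k-1)/2 - n(n-1)/2} [n choose k]_{p,q} t^k ∏_{s=0}^{n-k-1} (p^s - q^s t)`. -/
noncomputable def pqBernstein (p q : ℝ) (n k : ℕ) (t : ℝ) : ℝ :=
  p ^ (k * (k - 1) / 2) / p ^ (n * (n - 1) / 2) * pqBinom p q n k * t ^ k *
    ∏ s ∈ Finset.range (n - k), (p ^ s - q ^ s * t)

/-- The `k`-th elementary symmetric polynomial in `n` variables:
`φ_{n,k}(u_1, …, u_n) = Σ_{1 ≤ i_1 < … < i_k ≤ n} u_{i_1} ⋯ u_{i_k}`. -/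
noncomputable def esymmEval (n k : ℕ) (u : Fin n → ℝ) : ℝ :=
  ∑ S ∈ Finset.powersetCard k (Finset.univ : Finset (Fin n)), ∏ i ∈ S, u i

/-- A function `f : ℝ^n → ℝ` is symmetric if it is invariant under all permutations
of its arguments. -/
def IsSymmetricFn (n : ℕ) (f : (Fin n → ℝ) → ℝ) : Prop :=
  ∀ (σ : Equiv.Perm (Fin n)) (u : Fin n → ℝ), f (fun i => u (σ i)) = f u

/-- A function `f : ℝ^n → ℝ` is multiaffine if, fixing all variables except the `j`-th,
the resulting one-variable function is affine (degree at most one). -/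
def IsMultiaffine (n : ℕ) (f : (Fin n → ℝ) → ℝ) : Prop :=
  ∀ (j : Fin n) (u : Fin n → ℝ), ∃ a b : ℝ,
    ∀ x : ℝ, f (Function.update u j x) = a * x + b

/-! The blossom value at `(0, …, 0, p^{n-1}, …, p^{n-i}q^{i-1}, u_1, …, u_k)` is affine in `u_k`,
so it interpolates between its values at `u_k = 0` and `u_k = p^{n-1-i}q^i`. By symmetry these are
again values of the same kind with `k - 1` free arguments, for the indices `i` and `i + 1`: this is
the recursion defining `Q`. It remains to identify the values without free arguments with the
control points. Interpolating the diagonal arguments away one at a time expands `S` in the Bernstein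
basis with those values as coefficients, and the basis is linearly independent because the
lowest-order term of `B_i^n` is a non-zero multiple of `t^i`. -/

open Polynomial

theorem IsSymmetricFn.apply_eq_of_map_univ_eq {n : ℕ} {s : (Fin n → ℝ) → ℝ}
    (hsym : IsSymmetricFn n s) {f g : Fin n → ℝ}
    (h : (Finset.univ : Finset (Fin n)).val.map f = (Finset.univ : Finset (Fin n)).val.map g) :
    s f = s g := by
  have fiberEquiv (a : ℝ) : Nonempty ({i // f i = a} ≃ {i // g i = a}) := by
    have hcount := congrArg (Multiset.count a) h
    rw [Multiset.count_map, Multiset.count_map, ← Finset.filter_val, ← Finset.filter_val,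
      Finset.card_val, Finset.card_val] at hcount
    rw [← Fintype.card_eq, Fintype.card_subtype, Fintype.card_subtype]
    simpa only [eq_comm] using hcount
  have hσ : f = fun i => g (Equiv.ofFiberEquiv (fun a => (fiberEquiv a).some) i) :=
    funext fun i => (Equiv.ofFiberEquiv_map _ i).symm
  rw [hσ, hsym]

theorem IsMultiaffine.apply_update {n : ℕ} {s : (Fin n → ℝ) → ℝ} (haff : IsMultiaffine n s)
    (j : Fin n) (u : Fin n → ℝ) (x : ℝ) {y : ℝ} (hy : y ≠ 0) :
    s (Function.update u j x) =
      (1 - x / y) * s (Function.update u j 0) + x / y * s (Function.update u j y) := by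
  obtain ⟨a, b, hab⟩ := haff j u
  rw [hab, hab, hab]
  field_simp
  ring

/-- The elements of `M`, in an arbitrary order, followed by zeros: an argument list at which to
evaluate a symmetric function of `n` variables. Elements beyond the first `n` are cut off, so this
is only meaningful for `M.card ≤ n`. -/
noncomputable def zeroPad (n : ℕ) (M : Multiset ℝ) : Fin n → ℝ :=
  fun j => M.toList.getD j 0

theorem map_univ_zeroPad {n : ℕ} {M : Multiset ℝ} (hM : M.card ≤ n) :
    (Finset.univ : Finset (Fin n)).val.map (zeroPad n M) =
      M + Multiset.replicate (n - M.card) 0 := by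
  have hlist : List.ofFn (zeroPad n M) = M.toList ++ List.replicate (n - M.card) 0 := by
    apply List.ext_getElem
    · simp [hM]
    · intro j _ _
      by_cases hj : j < M.card <;> simp [zeroPad, List.getElem_append, hj]
  rw [Fin.univ_val_map, hlist, ← Multiset.coe_add, Multiset.coe_toList, Multiset.coe_replicate]

theorem map_univ_update_zeroPad {n : ℕ} {M : Multiset ℝ} (hM : M.card < n) (x : ℝ) :
    (Finset.univ : Finset (Fin n)).val.map (Function.update (zeroPad n M) ⟨M.card, hM⟩ x) =
      x ::ₘ M + Multiset.replicate (n - (M.card + 1)) 0 := by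
  have hlist : List.ofFn (Function.update (zeroPad n M) ⟨M.card, hM⟩ x) =
      M.toList ++ x :: List.replicate (n - (M.card + 1)) 0 := by
    apply List.ext_getElem
    · simp only [List.length_ofFn, List.length_append, Multiset.length_toList, List.length_cons,
        List.length_replicate]
      omega
    · intro j _ _
      rcases lt_trichotomy j M.card with hj | rfl | hj
      · simp [zeroPad, hj, hj.ne]
      · simp
      · obtain ⟨d, rfl⟩ := Nat.exists_eq_add_of_lt hj
        simp [zeroPad, add_assoc]
  rw [Fin.univ_val_map, hlist, ← Multiset.coe_add, Multiset.coe_toList, ← Multiset.cons_coe,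
    Multiset.coe_replicate, Multiset.add_cons, Multiset.cons_add]

theorem IsSymmetricFn.apply_eq_apply_zeroPad {n : ℕ} {s : (Fin n → ℝ) → ℝ}
    (hsym : IsSymmetricFn n s) {f : Fin n → ℝ} {M : Multiset ℝ}
    (h : (Finset.univ : Finset (Fin n)).val.map f = M + Multiset.replicate (n - M.card) 0) :
    s f = s (zeroPad n M) := by
  have hcard : n = M.card + (n - M.card) := by simpa using congrArg Multiset.card h
  exact hsym.apply_eq_of_map_univ_eq (h.trans (map_univ_zeroPad (by omega)).symm)

theorem IsMultiaffine.apply_zeroPad_cons {n : ℕ} {s : (Fin n → ℝ) → ℝ}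
    (haff : IsMultiaffine n s) (hsym : IsSymmetricFn n s) {M : Multiset ℝ} (hM : M.card < n)
    (x : ℝ) {y : ℝ} (hy : y ≠ 0) :
    s (zeroPad n (x ::ₘ M)) =
      (1 - x / y) * s (zeroPad n M) + x / y * s (zeroPad n (y ::ₘ M)) := by
  have update_cons (z : ℝ) :
      s (Function.update (zeroPad n M) ⟨M.card, hM⟩ z) = s (zeroPad n (z ::ₘ M)) :=
    hsym.apply_eq_apply_zeroPad (by rw [map_univ_update_zeroPad, Multiset.card_cons])
  have update_zero : Function.update (zeroPad n M) ⟨M.card, hM⟩ 0 = zeroPad n M :=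
    Function.update_eq_self_iff.2 (by simp [zeroPad])
  rw [← update_cons x, ← update_cons y, haff.apply_update _ _ x hy, update_zero]

/-- The `i`-th diagonal argument of the (p,q)-blossom at `t = 1`, indexed from `0`. -/
noncomputable def pqNode (n : ℕ) (p q : ℝ) (i : ℕ) : ℝ :=
  p ^ (n - 1 - i) * q ^ i

/-- The first `i` diagonal arguments of the (p,q)-blossom at `t = 1`. The control point `P_i` is the
blossom value at these, padded with zeros. -/
noncomputable def pqNodes (n : ℕ) (p q : ℝ) (i : ℕ) : Multiset ℝ :=
  (Multiset.range i).map (pqNode n p q)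

theorem pqNode_ne_zero (n : ℕ) {p q : ℝ} (hp : p ≠ 0) (hq : q ≠ 0) (i : ℕ) :
    pqNode n p q i ≠ 0 :=
  mul_ne_zero (pow_ne_zero _ hp) (pow_ne_zero _ hq)

theorem card_pqNodes (n : ℕ) (p q : ℝ) (i : ℕ) : (pqNodes n p q i).card = i := by
  simp [pqNodes]

theorem pqNodes_succ (n : ℕ) (p q : ℝ) (i : ℕ) :
    pqNodes n p q (i + 1) = pqNode n p q i ::ₘ pqNodes n p q i := by
  simp [pqNodes, Multiset.range_succ]

theorem mul_pqNode_div_pqNode {n : ℕ} {p q : ℝ} (hp : p ≠ 0) (hq : q ≠ 0) {i m : ℕ} (him : i ≤ m)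
    (hmn : m < n) (t : ℝ) :
    pqNode n p q m * t / pqNode n p q i = (q / p) ^ (m - i) * t := by
  obtain ⟨j, rfl⟩ := Nat.exists_eq_add_of_le him
  rw [pqNode, pqNode, show n - 1 - i = (n - 1 - (i + j)) + j by omega, Nat.add_sub_cancel_left,
    div_pow, pow_add, pow_add]
  field_simp

theorem div_pqNode_eq_zpow (p q : ℝ) {n i : ℕ} (hi : i < n) (x : ℝ) :
    x / pqNode n p q i = x * p ^ ((i : ℤ) + 1 - n) * q ^ (-(i : ℤ)) := by
  rw [pqNode, show (i : ℤ) + 1 - n = -((n - 1 - i : ℕ) : ℤ) by omega, zpow_neg, zpow_neg,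
    zpow_natCast, zpow_natCast, div_eq_mul_inv, mul_inv, mul_assoc]

theorem IsMultiaffine.apply_zeroPad_pqNodes_add_cons {n : ℕ} {p q : ℝ} (hp : p ≠ 0) (hq : q ≠ 0)
    {s : (Fin n → ℝ) → ℝ} (haff : IsMultiaffine n s) (hsym : IsSymmetricFn n s) {i : ℕ}
    {U : Multiset ℝ} (hU : i + U.card < n) (x : ℝ) :
    s (zeroPad n (pqNodes n p q i + x ::ₘ U)) =
      (1 - x / pqNode n p q i) * s (zeroPad n (pqNodes n p q i + U)) +
        x / pqNode n p q i * s (zeroPad n (pqNodes n p q (i + 1) + U)) := by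
  rw [Multiset.add_cons, pqNodes_succ, Multiset.cons_add]
  exact haff.apply_zeroPad_cons hsym (by rwa [Multiset.card_add, card_pqNodes]) x
    (pqNode_ne_zero n hp hq i)

theorem pqInt_add (p q : ℝ) (a b : ℕ) :
    pqInt p q (a + b) = p ^ a * pqInt p q b + q ^ b * pqInt p q a := by
  unfold pqInt
  rw [add_comm a b, Finset.sum_range_add, Finset.mul_sum, Finset.mul_sum]
  congr 1 <;> refine Finset.sum_congr rfl fun j hj => ?_ <;> rw [Finset.mem_range] at hj
  · rw [show b + a - 1 - j = a + (b - 1 - j) by omega, pow_add, mul_assoc]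
  · rw [show b + a - 1 - (b + j) = a - 1 - j by omega, pow_add, mul_left_comm]

theorem pqInt_ne_zero {p q : ℝ} (hpq : p + q ≠ 0) {n : ℕ} (hn : n ≠ 0) : pqInt p q n ≠ 0 := by
  obtain ⟨m, rfl⟩ := Nat.exists_eq_succ_of_ne_zero hn
  rcases eq_or_ne p 0 with rfl | hp
  · have hq : q ≠ 0 := by simpa using hpq
    have hlower : ∑ j ∈ Finset.range m, (0 : ℝ) ^ (m - j) * q ^ j = 0 :=
      Finset.sum_eq_zero fun j hj => by
        rw [zero_pow (Nat.sub_ne_zero_of_lt (Finset.mem_range.1 hj)), zero_mul]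
    simp [pqInt, Finset.sum_range_succ, hlower, hq]
  · have hgeom : pqInt p q (m + 1) = p ^ m * ∑ j ∈ Finset.range (m + 1), (q / p) ^ j := by
      rw [pqInt, Finset.mul_sum]
      refine Finset.sum_congr rfl fun j hj => ?_
      rw [Nat.add_sub_cancel, pow_sub₀ p hp (Finset.mem_range_succ_iff.1 hj), div_pow]
      field_simp
    have hratio : q / p ≠ -1 := fun h => hpq (by rw [(div_eq_iff hp).1 h]; ring)
    rw [hgeom]
    exact mul_ne_zero (pow_ne_zero m hp) (geom_sum_ne_zero hratio hn)

theorem pqFact_ne_zero {p q : ℝ} (hpq : p + q ≠ 0) (n : ℕ) : pqFact p q n ≠ 0 := by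
  induction n with
  | zero => exact one_ne_zero
  | succ n ih => exact mul_ne_zero ih (pqInt_ne_zero hpq n.succ_ne_zero)

theorem pqInt_succ_mul_pqBinom {p q : ℝ} (hpq : p + q ≠ 0) {n k : ℕ} (hk : k ≤ n) :
    pqInt p q (n + 1) * pqBinom p q n k = pqInt p q (n + 1 - k) * pqBinom p q (n + 1) k := by
  have hk₀ := pqFact_ne_zero hpq k
  have hnk₀ := pqFact_ne_zero hpq (n - k)
  have hi₀ := pqInt_ne_zero hpq (n - k).succ_ne_zero
  simp only [pqBinom, Nat.sub_add_comm hk, pqFact]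
  field_simp

theorem pqInt_succ_mul_pqBinom_eq_succ {p q : ℝ} (hpq : p + q ≠ 0) (n k : ℕ) :
    pqInt p q (n + 1) * pqBinom p q n k =
      pqInt p q (k + 1) * pqBinom p q (n + 1) (k + 1) := by
  have hk₀ := pqFact_ne_zero hpq k
  have hnk₀ := pqFact_ne_zero hpq (n - k)
  have hi₀ := pqInt_ne_zero hpq k.succ_ne_zero
  simp only [pqBinom, Nat.add_sub_add_right, pqFact]
  field_simp

theorem pqInt_succ_mul_pqBernstein_mul_one_sub {p q : ℝ} (hp : p ≠ 0) (hpq : p + q ≠ 0)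
    {m i : ℕ} (hi : i ≤ m) (t : ℝ) :
    pqInt p q (m + 1) * (pqBernstein p q m i t * (1 - (q / p) ^ (m - i) * t)) =
      p ^ i * pqInt p q (m + 1 - i) * pqBernstein p q (m + 1) i t := by
  have hbinom := pqInt_succ_mul_pqBinom hpq hi
  have hpow : p ^ m = p ^ i * p ^ (m - i) := by rw [← pow_add, Nat.add_sub_cancel' hi]
  unfold pqBernstein
  rw [Nat.triangle_succ, Nat.sub_add_comm hi, Finset.prod_range_succ, pow_add, hpow, div_pow]
  rw [Nat.sub_add_comm hi] at hbinom
  generalize ∏ j ∈ Finset.range (m - i), (p ^ j - q ^ j * t) = w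
  field_simp
  linear_combination t ^ i * w * (p ^ (m - i) - q ^ (m - i) * t) * hbinom

theorem pqInt_succ_mul_pqBernstein_mul {p q : ℝ} (hp : p ≠ 0) (hpq : p + q ≠ 0)
    {m i : ℕ} (hi : i ≤ m) (t : ℝ) :
    pqInt p q (m + 1) * (pqBernstein p q m i t * ((q / p) ^ (m - i) * t)) =
      q ^ (m - i) * pqInt p q (i + 1) * pqBernstein p q (m + 1) (i + 1) t := by
  have hbinom := pqInt_succ_mul_pqBinom_eq_succ hpq m i
  have hpow : p ^ m = p ^ i * p ^ (m - i) := by rw [← pow_add, Nat.add_sub_cancel' hi]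
  unfold pqBernstein
  rw [Nat.triangle_succ, Nat.triangle_succ, Nat.add_sub_add_right, pow_add, pow_add, hpow, div_pow]
  generalize ∏ j ∈ Finset.range (m - i), (p ^ j - q ^ j * t) = w
  field_simp
  linear_combination t * t ^ i * q ^ (m - i) * w * hbinom

theorem sum_pqBernstein_succ_mul {p q : ℝ} (hp : p ≠ 0) (hpq : p + q ≠ 0) (m : ℕ) (t : ℝ)
    (F : ℕ → ℝ) :
    ∑ i ∈ Finset.range (m + 2), pqBernstein p q (m + 1) i t * F i =
      ∑ i ∈ Finset.range (m + 1), pqBernstein p q m i t *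
        ((1 - (q / p) ^ (m - i) * t) * F i + (q / p) ^ (m - i) * t * F (i + 1)) := by
  -- Degree elevation splits `[m+1]` as `p^i [m+1-i] + q^{m+1-i} [i]`. The first weight vanishes at
  -- `i = m + 1` and the second at `i = 0`, so the boundary basis functions need no separate case.
  let α (i : ℕ) : ℝ := p ^ i * pqInt p q (m + 1 - i) * (pqBernstein p q (m + 1) i t * F i)
  let β (i : ℕ) : ℝ := q ^ (m + 1 - i) * pqInt p q i * (pqBernstein p q (m + 1) i t * F i)
  have hα : α (m + 1) = 0 := by simp [α, pqInt]
  have hβ : β 0 = 0 := by simp [β, pqInt]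
  have hαβ : ∀ i ∈ Finset.range (m + 2),
      pqInt p q (m + 1) * (pqBernstein p q (m + 1) i t * F i) = α i + β i := fun i hi => by
    rw [← add_mul, ← pqInt_add, Nat.add_sub_cancel' (Finset.mem_range_succ_iff.1 hi)]
  apply mul_left_cancel₀ (pqInt_ne_zero hpq m.succ_ne_zero)
  rw [Finset.mul_sum, Finset.sum_congr rfl hαβ, Finset.sum_add_distrib, Finset.sum_range_succ α, hα,
    Finset.sum_range_succ' β, hβ, add_zero, add_zero, ← Finset.sum_add_distrib, Finset.mul_sum]
  refine Finset.sum_congr rfl fun i hi => ?_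
  have him : i ≤ m := Finset.mem_range_succ_iff.1 hi
  simp only [α, β, Nat.add_sub_add_right]
  linear_combination -F i * pqInt_succ_mul_pqBernstein_mul_one_sub hp hpq him t -
    F (i + 1) * pqInt_succ_mul_pqBernstein_mul hp hpq him t

theorem IsMultiaffine.apply_zeroPad_diagonal {n : ℕ} {p q : ℝ} (hp : p ≠ 0) (hq : q ≠ 0)
    (hpq : p + q ≠ 0) {s : (Fin n → ℝ) → ℝ} (haff : IsMultiaffine n s) (hsym : IsSymmetricFn n s)
    (t : ℝ) {m : ℕ} (hm : m ≤ n) :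
    s (zeroPad n ((Finset.Ico 0 n).val.map fun j => pqNode n p q j * t)) =
      ∑ i ∈ Finset.range (m + 1), pqBernstein p q m i t *
        s (zeroPad n (pqNodes n p q i + (Finset.Ico m n).val.map fun j => pqNode n p q j * t)) := by
  induction m with
  | zero => simp [pqBernstein, pqBinom, pqFact, pqNodes]
  | succ m ih =>
    have hIco : (Finset.Ico m n).val = m ::ₘ (Finset.Ico (m + 1) n).val := by
      rw [← Finset.insert_Ico_add_one_left_eq_Ico (Nat.lt_of_succ_le hm),
        Finset.insert_val_of_notMem (by simp)]
    rw [ih (Nat.le_of_succ_le hm), sum_pqBernstein_succ_mul hp hpq]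
    refine Finset.sum_congr rfl fun i hi => ?_
    have him : i ≤ m := Finset.mem_range_succ_iff.1 hi
    have hcard : i + ((Finset.Ico (m + 1) n).val.map fun j => pqNode n p q j * t).card < n := by
      rw [Multiset.card_map, Finset.card_val, Nat.card_Ico]
      omega
    rw [hIco, Multiset.map_cons, haff.apply_zeroPad_pqNodes_add_cons hp hq hsym hcard,
      mul_pqNode_div_pqNode hp hq him (Nat.lt_of_succ_le hm)]

theorem IsMultiaffine.apply_diagonal_eq_sum_pqBernstein {n : ℕ} {p q : ℝ} (hp : p ≠ 0)
    (hq : q ≠ 0) (hpq : p + q ≠ 0) {s : (Fin n → ℝ) → ℝ} (haff : IsMultiaffine n s)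
    (hsym : IsSymmetricFn n s) (t : ℝ) :
    s (fun i => p ^ (n - 1 - (i : ℕ)) * q ^ (i : ℕ) * t) =
      ∑ i ∈ Finset.range (n + 1), s (zeroPad n (pqNodes n p q i)) * pqBernstein p q n i t := by
  have hdiag : s (fun i => p ^ (n - 1 - (i : ℕ)) * q ^ (i : ℕ) * t) =
      s (zeroPad n ((Finset.Ico 0 n).val.map fun j => pqNode n p q j * t)) := by
    refine hsym.apply_eq_apply_zeroPad ?_
    rw [Fin.univ_val_map, Nat.Ico_zero_eq_range, Finset.range_val, ← Multiset.coe_range,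
      Multiset.map_coe, List.ofFn_eq_map, ← List.map_coe_finRange_eq_range, List.map_map]
    simp [Function.comp_def, pqNode]
  rw [hdiag, haff.apply_zeroPad_diagonal hp hq hpq hsym t le_rfl]
  simp [mul_comm]

theorem linearIndependent_X_pow_mul {R : Type*} [Ring R] [NoZeroDivisors R] {n : ℕ}
    {g : Fin n → R[X]} (hg : ∀ i, (g i).coeff 0 ≠ 0) :
    LinearIndependent R fun i : Fin n => X ^ (i : ℕ) * g i := by
  rw [Fintype.linearIndependent_iff]
  intro c hc i
  induction i using WellFoundedLT.induction with
  | _ i ih =>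
    have hcoeff : ∑ j, c j * (X ^ (j : ℕ) * g j).coeff i = 0 := by
      simpa [finsetSum_coeff] using congrArg (coeff · i) hc
    rw [Finset.sum_eq_single_of_mem i (Finset.mem_univ i), coeff_X_pow_mul', if_pos le_rfl,
      Nat.sub_self] at hcoeff
    · exact (mul_eq_zero.1 hcoeff).resolve_right (hg i)
    · intro j _ hj
      rcases hj.lt_or_gt with hlt | hgt
      · rw [ih j hlt, zero_mul]
      · rw [coeff_X_pow_mul', if_neg (Fin.lt_def.1 hgt).not_ge, mul_zero]

theorem exists_pqBernstein_eq_pow_mul_eval {p q : ℝ} (hp : p ≠ 0) (hpq : p + q ≠ 0) (n k : ℕ) :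
    ∃ g : ℝ[X], g.coeff 0 ≠ 0 ∧ ∀ t, pqBernstein p q n k t = t ^ k * g.eval t := by
  let c : ℝ := p ^ (k * (k - 1) / 2) / p ^ (n * (n - 1) / 2) * pqBinom p q n k
  have hbinom : pqBinom p q n k ≠ 0 :=
    div_ne_zero (pqFact_ne_zero hpq n)
      (mul_ne_zero (pqFact_ne_zero hpq k) (pqFact_ne_zero hpq (n - k)))
  refine ⟨C c * ∏ j ∈ Finset.range (n - k), (C (p ^ j) - C (q ^ j) * X), ?_, fun t => ?_⟩
  · simp [c, coeff_zero_eq_eval_zero, eval_prod, Finset.prod_ne_zero_iff, hp, hbinom]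
  · simp only [pqBernstein, c, eval_mul, eval_prod, eval_sub, eval_C, eval_X]
    ring

theorem linearIndependent_pqBernstein {p q : ℝ} (hp : p ≠ 0) (hpq : p + q ≠ 0) (n : ℕ) :
    LinearIndependent ℝ fun i : Fin (n + 1) => pqBernstein p q n i := by
  choose g hg hgeval using exists_pqBernstein_eq_pow_mul_eval hp hpq n
  have hindep := linearIndependent_X_pow_mul (n := n + 1) (g := fun i => g i) fun i => hg i
  rw [Fintype.linearIndependent_iff] at hindep ⊢
  refine fun c hc => hindep c (Polynomial.funext fun t => ?_)
  simpa [eval_finsetSum, hgeval] using congrFun hc t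

theorem controlPoint_eq_apply_zeroPad_pqNodes {n : ℕ} {p q : ℝ} (hp : p ≠ 0) (hq : q ≠ 0)
    (hpq : p + q ≠ 0) {s : (Fin n → ℝ) → ℝ} (hsym : IsSymmetricFn n s) (haff : IsMultiaffine n s)
    {P : ℕ → ℝ}
    (hdiag : ∀ t : ℝ, s (fun i => p ^ (n - 1 - (i : ℕ)) * q ^ (i : ℕ) * t) =
      ∑ i ∈ Finset.range (n + 1), P i * pqBernstein p q n i t)
    {i : ℕ} (hi : i ≤ n) :
    P i = s (zeroPad n (pqNodes n p q i)) := by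
  have hcoeff := Fintype.linearIndependent_iff.1 (linearIndependent_pqBernstein hp hpq n)
    (fun j => P j - s (zeroPad n (pqNodes n p q j))) <| funext fun t => by
      have h := hdiag t
      rw [haff.apply_diagonal_eq_sum_pqBernstein hp hq hpq hsym] at h
      rw [Finset.sum_range, Finset.sum_range] at h
      simp [sub_mul, h]
  exact sub_eq_zero.1 (hcoeff ⟨i, Nat.lt_succ_of_le hi⟩)

/-- The argument list `(0, …, 0, p^{n-1}, p^{n-2}q, …, p^{n-i}q^{i-1}, u_1, …, u_k)` of length `n`,
with `n - k - i` leading zeros, at which the blossom equals `Q_i^k(u_1, …, u_k)`. -/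
noncomputable def pqBlossomArgs {k n : ℕ} (hk : k ≤ n) (p q : ℝ) (i : ℕ) (u : Fin k → ℝ) :
    Fin n → ℝ := fun j =>
  if hj : (j : ℕ) < n - k then
    (if (j : ℕ) < n - k - i then 0
      else p ^ (n - 1 - ((j : ℕ) - (n - k - i))) * q ^ ((j : ℕ) - (n - k - i)))
  else u ⟨(j : ℕ) - (n - k), by omega⟩

theorem map_univ_pqBlossomArgs {k n : ℕ} (hk : k ≤ n) (p q : ℝ) {i : ℕ} (hi : i ≤ n - k)
    (u : Fin k → ℝ) :
    (Finset.univ : Finset (Fin n)).val.map (pqBlossomArgs hk p q i u) =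
      Multiset.replicate (n - k - i) 0 + pqNodes n p q i +
        (Finset.univ : Finset (Fin k)).val.map u := by
  have hlist : List.ofFn (pqBlossomArgs hk p q i u) =
      List.replicate (n - k - i) 0 ++ (List.range i).map (pqNode n p q) ++ List.ofFn u := by
    apply List.ext_getElem
    · simp only [List.length_ofFn, List.length_append, List.length_replicate, List.length_map,
        List.length_range]
      omega
    · intro j _ _
      simp only [List.getElem_append, List.getElem_ofFn, List.length_append, List.length_replicate,
        List.length_map, List.length_range, List.getElem_replicate, List.getElem_map,
        List.getElem_range, Nat.sub_add_cancel hi, pqBlossomArgs, pqNode]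
      split_ifs <;> rfl
  rw [Fin.univ_val_map, Fin.univ_val_map, hlist, pqNodes, ← Multiset.coe_range, Multiset.map_coe,
    ← Multiset.coe_replicate, Multiset.coe_add, Multiset.coe_add]

theorem IsSymmetricFn.apply_pqBlossomArgs {n : ℕ} {s : (Fin n → ℝ) → ℝ} (hsym : IsSymmetricFn n s)
    {k : ℕ} (hk : k ≤ n) (p q : ℝ) {i : ℕ} (hi : i ≤ n - k) (u : Fin k → ℝ) :
    s (pqBlossomArgs hk p q i u) =
      s (zeroPad n (pqNodes n p q i + (Finset.univ : Finset (Fin k)).val.map u)) := by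
  refine hsym.apply_eq_apply_zeroPad ?_
  rw [map_univ_pqBlossomArgs hk p q hi, Multiset.card_add, card_pqNodes, Multiset.card_map,
    Finset.card_val, Finset.card_fin, Nat.sub_right_comm, ← Nat.sub_add_eq, add_assoc, add_comm]

theorem map_univ_eq_cons_castSucc {α : Type*} {k : ℕ} (u : Fin (k + 1) → α) :
    (Finset.univ : Finset (Fin (k + 1))).val.map u =
      u (Fin.last k) ::ₘ (Finset.univ : Finset (Fin k)).val.map fun j => u j.castSucc := by
  rw [Fin.univ_val_map, Fin.univ_val_map, List.ofFn_succ_last, ← Multiset.coe_add, add_comm,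
    Multiset.coe_singleton, Multiset.singleton_add]

theorem eq_apply_zeroPad_of_recursion {n : ℕ} {p q : ℝ} (hp : p ≠ 0) (hq : q ≠ 0)
    {s : (Fin n → ℝ) → ℝ} (hsym : IsSymmetricFn n s) (haff : IsMultiaffine n s)
    {Q : (k : ℕ) → ℕ → (Fin k → ℝ) → ℝ}
    (hQ0 : ∀ i ≤ n, ∀ u : Fin 0 → ℝ, Q 0 i u = s (zeroPad n (pqNodes n p q i)))
    (hQrec : ∀ k, k < n → ∀ i, i ≤ n - k - 1 → ∀ u : Fin (k + 1) → ℝ,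
      Q (k + 1) i u =
        (1 - u (Fin.last k) * p ^ ((i : ℤ) + 1 - n) * q ^ (-(i : ℤ))) *
            Q k i (fun j => u j.castSucc) +
          u (Fin.last k) * p ^ ((i : ℤ) + 1 - n) * q ^ (-(i : ℤ)) *
            Q k (i + 1) (fun j => u j.castSucc))
    {k : ℕ} (hk : k ≤ n) {i : ℕ} (hi : i ≤ n - k) (u : Fin k → ℝ) :
    Q k i u = s (zeroPad n (pqNodes n p q i + (Finset.univ : Finset (Fin k)).val.map u)) := by
  induction k generalizing i with
  | zero =>
    rw [hQ0 i hi]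
    simp
  | succ k ih =>
    have hcard : i + ((Finset.univ : Finset (Fin k)).val.map fun j => u j.castSucc).card < n := by
      rw [Multiset.card_map, Finset.card_val, Finset.card_fin]
      omega
    rw [map_univ_eq_cons_castSucc u, haff.apply_zeroPad_pqNodes_add_cons hp hq hsym hcard,
      div_pqNode_eq_zpow p q (by omega), hQrec k hk i (by omega), ih (by omega) (by omega),
      ih (by omega) (by omega)]

theorem pq_blossom_recursive_evaluation_general (n : ℕ)
    (p q : ℝ) (hp : p ≠ 0) (hq : q ≠ 0) (hpq : p + q ≠ 0)
    (P : ℕ → ℝ) (S : ℝ → ℝ)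
    (hS : ∀ t : ℝ, S t = ∑ i ∈ Finset.range (n + 1), P i * pqBernstein p q n i t)
    (s : (Fin n → ℝ) → ℝ) (hsym : IsSymmetricFn n s) (haff : IsMultiaffine n s)
    (hdiag : ∀ t : ℝ, s (fun i => p ^ (n - 1 - (i : ℕ)) * q ^ (i : ℕ) * t) = S t)
    (Q : (k : ℕ) → ℕ → (Fin k → ℝ) → ℝ)
    (hQ0 : ∀ i ≤ n, ∀ u : Fin 0 → ℝ, Q 0 i u = P i)
    (hQrec : ∀ k, k < n → ∀ i, i ≤ n - k - 1 → ∀ u : Fin (k + 1) → ℝ,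
      Q (k + 1) i u =
        (1 - u (Fin.last k) * p ^ ((i : ℤ) + 1 - n) * q ^ (-(i : ℤ))) *
            Q k i (fun j => u j.castSucc) +
          u (Fin.last k) * p ^ ((i : ℤ) + 1 - n) * q ^ (-(i : ℤ)) *
            Q k (i + 1) (fun j => u j.castSucc)) :
    (∀ k, (hk : k ≤ n) → ∀ i, i ≤ n - k → ∀ u : Fin k → ℝ,
      Q k i u = s (pqBlossomArgs hk p q i u)) ∧
      ∀ u : Fin n → ℝ, Q n 0 u = s u := by
  have hP : ∀ i ≤ n, ∀ u : Fin 0 → ℝ, Q 0 i u = s (zeroPad n (pqNodes n p q i)) := fun i hi u =>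
    (hQ0 i hi u).trans <| controlPoint_eq_apply_zeroPad_pqNodes hp hq hpq hsym haff
      (fun t => (hdiag t).trans (hS t)) hi
  refine ⟨fun k hk i hi u => ?_, fun u => ?_⟩
  · rw [eq_apply_zeroPad_of_recursion hp hq hsym haff hP hQrec hk hi,
      hsym.apply_pqBlossomArgs hk p q hi]
  · rw [eq_apply_zeroPad_of_recursion hp hq hsym haff hP hQrec le_rfl (Nat.zero_le _)]
    exact (hsym.apply_eq_apply_zeroPad (by simp [pqNodes])).symm

/-- recursive evaluation of the (p,q)-blossom from the control points.
With `Q_i^0 = P_i` and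
`Q_i^{k+1}(u_1, …, u_{k+1}) = (1 - u_{k+1} p^{i+1-n} q^{-i}) Q_i^k(u_1, …, u_k)
  + u_{k+1} p^{i+1-n} q^{-i} Q_{i+1}^k(u_1, …, u_k)`,
one has `Q_i^k(u_1, …, u_k) = s(0, …, 0, p^{n-1}, p^{n-2}q, …, p^{n-i}q^{i-1}, u_1, …, u_k)`
(first `n-k-i` arguments zero); in particular `Q_0^n = s`. -/
theorem pq_blossom_recursive_evaluation (n : ℕ) (hn : 1 ≤ n)
    (p q : ℝ) (h0 : 0 < q) (hqp : q < p)
    (P : ℕ → ℝ) (S : ℝ → ℝ)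
    (hS : ∀ t : ℝ, S t = ∑ i ∈ Finset.range (n + 1), P i * pqBernstein p q n i t)
    (s : (Fin n → ℝ) → ℝ)
    (hsym : IsSymmetricFn n s) (haff : IsMultiaffine n s)
    (hdiag : ∀ t : ℝ, s (fun i => p ^ (n - 1 - (i : ℕ)) * q ^ (i : ℕ) * t) = S t)
    (Q : (k : ℕ) → ℕ → (Fin k → ℝ) → ℝ)
    (hQ0 : ∀ i ≤ n, ∀ u : Fin 0 → ℝ, Q 0 i u = P i)
    (hQrec : ∀ k, k < n → ∀ i, i ≤ n - k - 1 → ∀ u : Fin (k + 1) → ℝ,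
      Q (k + 1) i u =
        (1 - u (Fin.last k) * p ^ ((i : ℤ) + 1 - n) * q ^ (-(i : ℤ))) *
            Q k i (fun j => u j.castSucc) +
          u (Fin.last k) * p ^ ((i : ℤ) + 1 - n) * q ^ (-(i : ℤ)) *
            Q k (i + 1) (fun j => u j.castSucc)) :
    (∀ k, (hk : k ≤ n) → ∀ i, i ≤ n - k → ∀ u : Fin k → ℝ,
      Q k i u = s (fun j : Fin n =>
        if hj : (j : ℕ) < n - k then
          (if (j : ℕ) < n - k - i then 0
            else p ^ (n - 1 - ((j : ℕ) - (n - k - i))) * q ^ ((j : ℕ) - (n - k - i)))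
        else u ⟨(j : ℕ) - (n - k), by omega⟩)) ∧
      ∀ u : Fin n → ℝ, Q n 0 u = s u := by
  have hp : 0 < p := h0.trans hqp
  exact pq_blossom_recursive_evaluation_general n p q hp.ne' h0.ne' (add_pos hp h0).ne' P S hS s
    hsym haff hdiag Q hQ0 hQrec
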